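/- Let D ⊆ ℝⁿ be a compact convex set with nonempty interior, let φ : D → ℝ be continuous with φ(z) > 0 for all z ∈ D, and let N ≥ 2. If x = (x₁, …, x_N) ∈ (int D)ᴺ has pairwise distinct components and x is a local minimizer of the locational cost L(y) := Σ_{p=1}^N ∫_{V_p(y)} ‖y_p − z‖²·φ(z) dz, then x is a centroidal Voronoi configuration: x_p = c_p(x) for every p, where c_p(x) := (∫_{V_p(x)} z·φ(z) dz)/(∫_{V_p(x)} φ(z) dz). -/

import Mathlib

open MeasureTheory

/-- The Voronoi cell of agent `p` in workspace `D` for configuration `y`. -/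
def VCell {n N : ℕ} (D : Set (EuclideanSpace ℝ (Fin n)))
    (y : Fin N → EuclideanSpace ℝ (Fin n)) (p : Fin N) : Set (EuclideanSpace ℝ (Fin n)) :=
  {z ∈ D | ∀ r : Fin N, r ≠ p → ‖y p - z‖ ≤ ‖y r - z‖}

/-- The locational cost of configuration `y` over workspace `D` with density `φ`. -/
noncomputable def locCost {n N : ℕ} (D : Set (EuclideanSpace ℝ (Fin n)))
    (φ : EuclideanSpace ℝ (Fin n) → ℝ) (y : Fin N → EuclideanSpace ℝ (Fin n)) : ℝ :=
  ∑ p : Fin N, ∫ z in VCell D y p, ‖y p - z‖ ^ 2 * φ z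

/-- The centroid of agent `p`'s Voronoi cell. -/
noncomputable def vCentroid {n N : ℕ} (D : Set (EuclideanSpace ℝ (Fin n)))
    (φ : EuclideanSpace ℝ (Fin n) → ℝ) (x : Fin N → EuclideanSpace ℝ (Fin n))
    (p : Fin N) : EuclideanSpace ℝ (Fin n) :=
  (∫ z in VCell D x p, φ z)⁻¹ • ∫ z in VCell D x p, φ z • z

section Voronoi

variable {n N : ℕ} {D : Set (EuclideanSpace ℝ (Fin n))}
  {φ : EuclideanSpace ℝ (Fin n) → ℝ} {x y : Fin N → EuclideanSpace ℝ (Fin n)}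

theorem VCell_subset (p : Fin N) : VCell D y p ⊆ D := fun _ hz => hz.1

theorem isClosed_VCell (hD : IsClosed D) (p : Fin N) : IsClosed (VCell D y p) := by
  have h : VCell D y p = D ∩ ⋂ r : Fin N, ⋂ _ : r ≠ p, {z | ‖y p - z‖ ≤ ‖y r - z‖} := by
    ext z
    simp [VCell]
  rw [h]
  exact hD.inter (isClosed_iInter fun r => isClosed_iInter fun _ =>
    isClosed_le (by fun_prop) (by fun_prop))

theorem le_of_mem_VCell {p : Fin N} {z : EuclideanSpace ℝ (Fin n)} (hz : z ∈ VCell D y p)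
    (r : Fin N) : ‖y p - z‖ ≤ ‖y r - z‖ := by
  rcases eq_or_ne r p with rfl | h
  · exact le_rfl
  · exact hz.2 r h

theorem iUnion_VCell [Nonempty (Fin N)] : ⋃ p, VCell D y p = D := by
  refine Set.Subset.antisymm (Set.iUnion_subset VCell_subset) fun z hz => ?_
  obtain ⟨p, hp⟩ := Finite.exists_min fun r => ‖y r - z‖
  exact Set.mem_iUnion.2 ⟨p, hz, fun r _ => hp r⟩

theorem aedisjoint_VCell {p q : Fin N} (hpq : y p ≠ y q) :
    AEDisjoint volume (VCell D y p) (VCell D y q) := by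
  refine measure_mono_null (t := (AffineSubspace.perpBisector (y p) (y q) : Set _)) ?_ ?_
  · rintro z ⟨hp, hq⟩
    rw [SetLike.mem_coe, AffineSubspace.mem_perpBisector_iff_dist_eq', dist_eq_norm, dist_eq_norm]
    exact le_antisymm (le_of_mem_VCell hp q) (le_of_mem_VCell hq p)
  · exact Measure.addHaar_affineSubspace _ _
      fun h => hpq (AffineSubspace.perpBisector_eq_top.1 h)

/-- Voronoi cells of a configuration of distinct points tile the workspace up to a null set. -/
theorem setIntegral_eq_sum_VCell [Nonempty (Fin N)] (hD : IsClosed D)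
    (hy : Function.Injective y) {f : EuclideanSpace ℝ (Fin n) → ℝ} (hf : IntegrableOn f D) :
    ∫ z in D, f z = ∑ p, ∫ z in VCell D y p, f z := by
  conv_lhs => rw [← iUnion_VCell (D := D) (y := y)]
  rw [integral_iUnion_ae (fun p => (isClosed_VCell hD p).measurableSet.nullMeasurableSet)
    (fun p q hpq => aedisjoint_VCell (hy.ne hpq)) (by rwa [iUnion_VCell]), tsum_fintype]

theorem infDist_of_mem_VCell {p : Fin N} {z : EuclideanSpace ℝ (Fin n)}
    (hz : z ∈ VCell D y p) : Metric.infDist z (Set.range y) = ‖y p - z‖ := by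
  refine le_antisymm ?_ ?_
  · rw [← dist_eq_norm, dist_comm]
    exact Metric.infDist_le_dist_of_mem (Set.mem_range_self p)
  · refine (Metric.le_infDist ⟨y p, Set.mem_range_self p⟩).2 ?_
    rintro _ ⟨r, rfl⟩
    rw [dist_comm, dist_eq_norm]
    exact le_of_mem_VCell hz r

theorem integrableOn_of_continuousOn_VCell {E : Type*} [NormedAddCommGroup E] (hD : IsCompact D)
    {f : EuclideanSpace ℝ (Fin n) → E} (hf : ContinuousOn f D) (p : Fin N) :
    IntegrableOn f (VCell D y p) :=
  (hf.integrableOn_compact hD).mono_set (VCell_subset p)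

/-- The Voronoi partition is optimal among the partitions of the workspace given by Voronoi cells
of distinct points. -/
theorem locCost_le_sum_VCell [Nonempty (Fin N)] (hD : IsCompact D) (hφ : ContinuousOn φ D)
    (hφ0 : ∀ z ∈ D, 0 ≤ φ z) (hx : Function.Injective x) (hy : Function.Injective y) :
    locCost D φ y ≤ ∑ p, ∫ z in VCell D x p, ‖y p - z‖ ^ 2 * φ z := by
  have hc : ContinuousOn (fun z => Metric.infDist z (Set.range y) ^ 2 * φ z) D :=
    ((Metric.continuous_infDist_pt _).pow 2).continuousOn.mul hφ
  calc locCost D φ y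
      = ∑ p, ∫ z in VCell D y p, Metric.infDist z (Set.range y) ^ 2 * φ z :=
        Finset.sum_congr rfl fun p _ =>
          setIntegral_congr_fun (isClosed_VCell hD.isClosed p).measurableSet fun z hz => by
            simp only [infDist_of_mem_VCell hz]
    _ = ∑ p, ∫ z in VCell D x p, Metric.infDist z (Set.range y) ^ 2 * φ z := by
        rw [← setIntegral_eq_sum_VCell hD.isClosed hy (hc.integrableOn_compact hD),
          ← setIntegral_eq_sum_VCell hD.isClosed hx (hc.integrableOn_compact hD)]
    _ ≤ _ := by
        refine Finset.sum_le_sum fun p _ => setIntegral_mono_on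
          (integrableOn_of_continuousOn_VCell hD hc p)
          (integrableOn_of_continuousOn_VCell hD (ContinuousOn.mul (by fun_prop) hφ) p)
          (isClosed_VCell hD.isClosed p).measurableSet fun z hz => ?_
        have h : Metric.infDist z (Set.range y) ≤ ‖y p - z‖ := by
          rw [← dist_eq_norm, dist_comm]
          exact Metric.infDist_le_dist_of_mem (Set.mem_range_self p)
        exact mul_le_mul_of_nonneg_right (pow_le_pow_left₀ Metric.infDist_nonneg h 2)
          (hφ0 z (VCell_subset p hz))

theorem setIntegral_VCell_pos (hD : IsCompact D) (hφ : ContinuousOn φ D)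
    (hφ0 : ∀ z ∈ D, 0 < φ z) (hx : Function.Injective x) {p : Fin N}
    (hxp : x p ∈ interior D) : 0 < ∫ z in VCell D x p, φ z := by
  have hm := (isClosed_VCell (y := x) hD.isClosed p).measurableSet
  rw [setIntegral_pos_iff_support_of_nonneg_ae
    (ae_restrict_of_forall_mem hm fun z hz => (hφ0 z (VCell_subset p hz)).le)
    (integrableOn_of_continuousOn_VCell hD hφ p)]
  have hU : IsOpen (interior D ∩ ⋂ r : Fin N, ⋂ _ : r ≠ p, {z | ‖x p - z‖ < ‖x r - z‖}) :=
    isOpen_interior.inter (isOpen_iInter_of_finite fun r => isOpen_iInter_of_finite fun _ =>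
      isOpen_lt (by fun_prop) (by fun_prop))
  refine (hU.measure_pos volume ⟨x p, hxp, ?_⟩).trans_le (measure_mono ?_)
  · simp only [Set.mem_iInter, Set.mem_ofPred_eq, sub_self, norm_zero, norm_pos_iff]
    exact fun r hr => sub_ne_zero.2 (hx.ne hr)
  · rintro z ⟨hz, hz'⟩
    simp only [Set.mem_iInter, Set.mem_ofPred_eq] at hz'
    exact ⟨(hφ0 z (interior_subset hz)).ne', interior_subset hz, fun r hr => (hz' r hr).le⟩

/-- Expansion of the second moment of a cell about a translated point. -/
theorem setIntegral_VCell_norm_add_smul (hD : IsCompact D) (hφ : ContinuousOn φ D) (p : Fin N)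
    (a v : EuclideanSpace ℝ (Fin n)) (t : ℝ) :
    ∫ z in VCell D x p, ‖a + t • v - z‖ ^ 2 * φ z =
      (∫ z in VCell D x p, ‖a - z‖ ^ 2 * φ z)
        + 2 * t * inner ℝ v ((∫ z in VCell D x p, φ z) • a - ∫ z in VCell D x p, φ z • z)
        + t ^ 2 * ‖v‖ ^ 2 * ∫ z in VCell D x p, φ z := by
  have h0 := integrableOn_of_continuousOn_VCell (y := x) hD hφ p
  have h1 : IntegrableOn (fun z => φ z • z) (VCell D x p) :=
    integrableOn_of_continuousOn_VCell hD (hφ.smul continuousOn_id) p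
  have h2 : IntegrableOn (fun z => ‖a - z‖ ^ 2 * φ z) (VCell D x p) :=
    integrableOn_of_continuousOn_VCell hD (ContinuousOn.mul (by fun_prop) hφ) p
  have h3 : IntegrableOn (fun z => φ z • a - φ z • z) (VCell D x p) := (h0.smul_const a).sub h1
  have h4 : (∫ z in VCell D x p, φ z) • a - ∫ z in VCell D x p, φ z • z =
      ∫ z in VCell D x p, (φ z • a - φ z • z) := by
    rw [integral_sub (h0.smul_const a) h1, integral_smul_const]
  have h6 : IntegrableOn
      (fun z => ‖a - z‖ ^ 2 * φ z + 2 * t * inner ℝ v (φ z • a - φ z • z)) (VCell D x p) :=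
    h2.add ((h3.const_inner v).const_mul _)
  rw [h4, ← integral_inner h3, ← integral_const_mul, ← integral_const_mul,
    ← integral_add h2 ((h3.const_inner v).const_mul _), ← integral_add h6 (h0.const_mul _)]
  congr 1
  ext z
  have h5 : a + t • v - z = (a - z) + t • v := by abel
  rw [h5, norm_add_sq_real, norm_smul, mul_pow, Real.norm_eq_abs, sq_abs, ← smul_sub,
    inner_smul_right, inner_smul_right, real_inner_comm]
  ring

end Voronoi

theorem stmt17 {n N : ℕ} (hn : 1 ≤ n) (hN : 2 ≤ N)
    (D : Set (EuclideanSpace ℝ (Fin n))) (hDcomp : IsCompact D) (hDconv : Convex ℝ D)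
    (hDint : (interior D).Nonempty)
    (φ : EuclideanSpace ℝ (Fin n) → ℝ) (hφ : ContinuousOn φ D)
    (hφpos : ∀ z ∈ D, 0 < φ z)
    (x : Fin N → EuclideanSpace ℝ (Fin n)) (hxD : ∀ p, x p ∈ interior D)
    (hdist : ∀ p q : Fin N, p ≠ q → x p ≠ x q)
    (hmin : IsLocalMin (locCost D φ) x) :
    ∀ p : Fin N, x p = vCentroid D φ x p := by
  intro p
  have : Nonempty (Fin N) := ⟨p⟩
  have hx : Function.Injective x := fun a b hab => by
    by_contra h
    exact hdist a b h hab
  have hφ0 : ∀ z ∈ D, 0 ≤ φ z := fun z hz => (hφpos z hz).le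
  set M := ∫ z in VCell D x p, φ z with hM
  have hMpos : 0 < M := setIntegral_VCell_pos hDcomp hφ hφpos hx (hxD p)
  set v := vCentroid D φ x p - x p with hv
  let γ : ℝ → Fin N → EuclideanSpace ℝ (Fin n) := fun t => Function.update x p (x p + t • v)
  have hγ0 : γ 0 = x := by simp [γ]
  have hγc : Filter.Tendsto γ (nhds 0) (nhds x) := by
    have h : Continuous γ := continuous_const.update p (by fun_prop)
    simpa only [hγ0] using h.tendsto 0
  have hinj : ∀ᶠ t in nhds (0 : ℝ), Function.Injective (γ t) := by
    have h : ∀ a b : Fin N, a ≠ b → ∀ᶠ t in nhds (0 : ℝ), γ t a ≠ γ t b := fun a b hab =>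
      ((((tendsto_pi_nhds.1 hγc a).sub (tendsto_pi_nhds.1 hγc b)).eventually_ne
        (sub_ne_zero.2 (hx.ne hab))).mono fun _ => sub_ne_zero.1)
    have h' : ∀ᶠ t in nhds (0 : ℝ), ∀ a b : Fin N, a ≠ b → γ t a ≠ γ t b := by
      simpa only [Filter.eventually_all] using h
    filter_upwards [h'] with t ht a b hab
    by_contra hne
    exact ht a b hne hab
  have hcent : M • x p - ∫ z in VCell D x p, φ z • z = -(M • v) := by
    rw [hv, vCentroid, ← hM, smul_sub, smul_inv_smul₀ hMpos.ne', neg_sub]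
  have hev : ∀ᶠ t in nhds (0 : ℝ), 0 ≤ 2 * t * -(M * ‖v‖ ^ 2) + t ^ 2 * ‖v‖ ^ 2 * M := by
    filter_upwards [hinj, hγc.eventually hmin] with t ht hle
    have h := hle.trans (locCost_le_sum_VCell hDcomp hφ hφ0 hx ht)
    rw [locCost, ← Finset.add_sum_erase _ _ (Finset.mem_univ p),
      ← Finset.add_sum_erase _ _ (Finset.mem_univ p)] at h
    have hrest : ∑ q ∈ Finset.univ.erase p, ∫ z in VCell D x q, ‖γ t q - z‖ ^ 2 * φ z =
        ∑ q ∈ Finset.univ.erase p, ∫ z in VCell D x q, ‖x q - z‖ ^ 2 * φ z :=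
      Finset.sum_congr rfl fun q hq => by
        simp only [γ, Function.update_of_ne (Finset.ne_of_mem_erase hq)]
    have hp : γ t p = x p + t • v := Function.update_self _ _ _
    rw [hrest, hp, setIntegral_VCell_norm_add_smul hDcomp hφ, ← hM, hcent, inner_neg_right,
      inner_smul_right, real_inner_self_eq_norm_sq] at h
    linarith
  obtain ⟨ε, hε, hball⟩ := Metric.eventually_nhds_iff.1 hev
  have hs : 0 < min (ε / 2) 1 := by positivity
  have h := @hball (min (ε / 2) 1) (by
    rw [Real.dist_0_eq_abs, abs_of_pos hs]
    linarith [min_le_left (ε / 2) 1])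
  have hs1 := min_le_right (ε / 2) 1
  generalize min (ε / 2) 1 = s at h hs hs1
  have hv0 : ‖v‖ = 0 := by
    by_contra hne
    have hpos : 0 < ‖v‖ ^ 2 * M := by positivity
    nlinarith [mul_pos hs hpos, mul_le_mul_of_nonneg_left hs1 (mul_pos hs hpos).le]
  exact (sub_eq_zero.1 (norm_eq_zero.1 hv0)).symm
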